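/- arXiv:1808.00587 — 2 statements merged into one kernel-verified Lean document; each statement's English description precedes it below -/
import Mathlib

section
/- Let ε', ε'' ∈ int(E) and let (X*(ε'), y*(ε'), S*(ε')) and (X*(ε''), y*(ε''), S*(ε'')) be maximally complementary solutions at ε' and ε'' respectively, and suppose π(ε') = π(ε''). Then for every ρ ∈ [0,1], writing ε_ρ = ρ ε' + (1−ρ) ε'', one has π(ε_ρ) = π(ε') = π(ε''), and the triple (ρ X*(ε') + (1−ρ) X*(ε''), ρ y*(ε') + (1−ρ) y*(ε''), ρ S*(ε') + (1−ρ) S*(ε'')) is a maximally complementary solution of (P_{ε_ρ}) and (D_{ε_ρ}). -/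
open Matrix Set

noncomputable section

variable {n m : ℕ}

/-- Feasibility for the primal SDO problem `(P_ε)` (the feasible set does not depend on `ε`). -/
def PrimalFeasible (A : Fin m → Matrix (Fin n) (Fin n) ℝ) (b : Fin m → ℝ)
    (X : Matrix (Fin n) (Fin n) ℝ) : Prop :=
  X.IsSymm ∧ (∀ i, ((A i) * X).trace = b i) ∧ X.PosSemidef

/-- Feasibility for the dual SDO problem `(D_ε)`. -/
def DualFeasible (C Cbar : Matrix (Fin n) (Fin n) ℝ)
    (A : Fin m → Matrix (Fin n) (Fin n) ℝ) (ε : ℝ)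
    (y : Fin m → ℝ) (S : Matrix (Fin n) (Fin n) ℝ) : Prop :=
  S.IsSymm ∧ (∑ i, y i • A i) + S = C + ε • Cbar ∧ S.PosSemidef

/-- The optimal value function `v(ε)` of `(P_ε)`, with values in `EReal`. -/
def vfun (C Cbar : Matrix (Fin n) (Fin n) ℝ) (A : Fin m → Matrix (Fin n) (Fin n) ℝ)
    (b : Fin m → ℝ) (ε : ℝ) : EReal :=
  sInf ((fun X => (((C + ε • Cbar) * X).trace : EReal)) '' {X | PrimalFeasible A b X})

/-- `E = {ε : v(ε) > -∞}`. -/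
def Eset (C Cbar : Matrix (Fin n) (Fin n) ℝ) (A : Fin m → Matrix (Fin n) (Fin n) ℝ)
    (b : Fin m → ℝ) : Set ℝ :=
  {ε | ⊥ < vfun C Cbar A b ε}

/-- The primal optimal set `P*(ε)`. -/
def PrimalOpt (C Cbar : Matrix (Fin n) (Fin n) ℝ) (A : Fin m → Matrix (Fin n) (Fin n) ℝ)
    (b : Fin m → ℝ) (ε : ℝ) : Set (Matrix (Fin n) (Fin n) ℝ) :=
  {X | PrimalFeasible A b X ∧ ∀ X', PrimalFeasible A b X' →
    ((C + ε • Cbar) * X).trace ≤ ((C + ε • Cbar) * X').trace}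

/-- The dual optimal set `D*(ε)`. -/
def DualOpt (C Cbar : Matrix (Fin n) (Fin n) ℝ) (A : Fin m → Matrix (Fin n) (Fin n) ℝ)
    (b : Fin m → ℝ) (ε : ℝ) : Set ((Fin m → ℝ) × Matrix (Fin n) (Fin n) ℝ) :=
  {p | DualFeasible C Cbar A ε p.1 p.2 ∧ ∀ y' S', DualFeasible C Cbar A ε y' S' →
    ∑ i, b i * y' i ≤ ∑ i, b i * p.1 i}

/-- A maximally complementary optimal solution: `X` lies in the relative interior of `P*(ε)`
and `(y, S)` in the relative interior of `D*(ε)`. -/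
def MaxComp (C Cbar : Matrix (Fin n) (Fin n) ℝ) (A : Fin m → Matrix (Fin n) (Fin n) ℝ)
    (b : Fin m → ℝ) (ε : ℝ) (X : Matrix (Fin n) (Fin n) ℝ) (y : Fin m → ℝ)
    (S : Matrix (Fin n) (Fin n) ℝ) : Prop :=
  X ∈ intrinsicInterior ℝ (PrimalOpt C Cbar A b ε) ∧
    (y, S) ∈ intrinsicInterior ℝ (DualOpt C Cbar A b ε)

/-- `π(ε) = π(ε')`: the optimal partitions at `ε` and `ε'` coincide, expressed through
maximally complementary solutions (`B = range X*`, `N = range S*`, `T` being determined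
by `B` and `N`). -/
def SamePartition (C Cbar : Matrix (Fin n) (Fin n) ℝ) (A : Fin m → Matrix (Fin n) (Fin n) ℝ)
    (b : Fin m → ℝ) (ε ε' : ℝ) : Prop :=
  ∃ X y S X' y' S', MaxComp C Cbar A b ε X y S ∧ MaxComp C Cbar A b ε' X' y' S' ∧
    LinearMap.range X.mulVecLin = LinearMap.range X'.mulVecLin ∧
    LinearMap.range S.mulVecLin = LinearMap.range S'.mulVecLin

/-- The standing assumptions: symmetric data, linearly independent constraint matrices and
the interior point condition at `ε = 0`. -/
def StandingAssumptions (C Cbar : Matrix (Fin n) (Fin n) ℝ)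
    (A : Fin m → Matrix (Fin n) (Fin n) ℝ) (b : Fin m → ℝ) : Prop :=
  C.IsSymm ∧ Cbar.IsSymm ∧ (∀ i, (A i).IsSymm) ∧ LinearIndependent ℝ A ∧
    ∃ X y S, PrimalFeasible A b X ∧ X.PosDef ∧ DualFeasible C Cbar A 0 y S ∧ S.PosDef

/-- The invariancy set of `ε̄`. -/
def InvSet (C Cbar : Matrix (Fin n) (Fin n) ℝ) (A : Fin m → Matrix (Fin n) (Fin n) ℝ)
    (b : Fin m → ℝ) (εbar : ℝ) : Set ℝ :=
  {ε | ε ∈ interior (Eset C Cbar A b) ∧ SamePartition C Cbar A b ε εbar}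

/-- `dim B(ε) = dim B(ε')` and `dim N(ε) = dim N(ε')`, expressed through maximally
complementary solutions. -/
def DimsMatch (C Cbar : Matrix (Fin n) (Fin n) ℝ) (A : Fin m → Matrix (Fin n) (Fin n) ℝ)
    (b : Fin m → ℝ) (ε ε' : ℝ) : Prop :=
  ∀ X y S X' y' S', MaxComp C Cbar A b ε X y S → MaxComp C Cbar A b ε' X' y' S' →
    Module.finrank ℝ (LinearMap.range X.mulVecLin) =
        Module.finrank ℝ (LinearMap.range X'.mulVecLin) ∧
      Module.finrank ℝ (LinearMap.range S.mulVecLin) =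
        Module.finrank ℝ (LinearMap.range S'.mulVecLin)

/-- A transition point: a singleton invariancy set such that every neighborhood contains a
parameter at which `dim B` or `dim N` differs. -/
def IsTransitionPoint (C Cbar : Matrix (Fin n) (Fin n) ℝ) (A : Fin m → Matrix (Fin n) (Fin n) ℝ)
    (b : Fin m → ℝ) (εbar : ℝ) : Prop :=
  εbar ∈ interior (Eset C Cbar A b) ∧
    (∀ ε ∈ interior (Eset C Cbar A b), ε ≠ εbar → ¬ SamePartition C Cbar A b ε εbar) ∧
    ∀ ξ : ℝ, 0 < ξ → ∃ ε ∈ Set.Ioo (εbar - ξ) (εbar + ξ) ∩ interior (Eset C Cbar A b),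
      ¬ DimsMatch C Cbar A b ε εbar

/-- Existence of a strictly complementary optimal solution at `ε`. -/
def HasStrictComp (C Cbar : Matrix (Fin n) (Fin n) ℝ) (A : Fin m → Matrix (Fin n) (Fin n) ℝ)
    (b : Fin m → ℝ) (ε : ℝ) : Prop :=
  ∃ X y S, X ∈ PrimalOpt C Cbar A b ε ∧ (y, S) ∈ DualOpt C Cbar A b ε ∧ (X + S).PosDef

/-- Nonsingularity of the Jacobian `J(X, y, S)` of the optimality system, as a linear map on
`S^n × ℝ^m × S^n`: only the trivial symmetric triple is mapped to zero. -/
def JNonsingular (A : Fin m → Matrix (Fin n) (Fin n) ℝ)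
    (X S : Matrix (Fin n) (Fin n) ℝ) : Prop :=
  ∀ (DX DS : Matrix (Fin n) (Fin n) ℝ) (Dy : Fin m → ℝ), DX.IsSymm → DS.IsSymm →
    (∀ i, ((A i) * DX).trace = 0) → ((∑ i, Dy i • A i) + DS = 0) →
    (DX * S + S * DX + X * DS + DS * X = 0) → DX = 0 ∧ Dy = 0 ∧ DS = 0

/-- Primal nondegeneracy of a primal feasible `X`. -/
def PrimalNondeg (A : Fin m → Matrix (Fin n) (Fin n) ℝ)
    (X : Matrix (Fin n) (Fin n) ℝ) : Prop :=
  ∃ (r : ℕ) (M₁ : Matrix (Fin n) (Fin r) ℝ) (M₂ : Matrix (Fin n) (Fin (n - r)) ℝ),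
    M₁ᵀ * M₁ = 1 ∧ M₂ᵀ * M₂ = 1 ∧ M₁ᵀ * M₂ = 0 ∧
    LinearMap.range M₁.mulVecLin = LinearMap.range X.mulVecLin ∧
    LinearIndependent ℝ (fun i =>
      Matrix.fromBlocks (M₁ᵀ * (A i) * M₁) (M₁ᵀ * (A i) * M₂) (M₂ᵀ * (A i) * M₁) 0)

/-- Dual nondegeneracy of a dual feasible `(y, S)` (the condition involves only `S`). -/
def DualNondeg (A : Fin m → Matrix (Fin n) (Fin n) ℝ)
    (S : Matrix (Fin n) (Fin n) ℝ) : Prop :=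
  ∃ (k : ℕ) (N₁ : Matrix (Fin n) (Fin k) ℝ),
    N₁ᵀ * N₁ = 1 ∧ LinearMap.range N₁.mulVecLin = LinearMap.ker S.mulVecLin ∧
    ∀ W : Matrix (Fin k) (Fin k) ℝ, W.IsSymm →
      W ∈ Submodule.span ℝ (Set.range fun i => N₁ᵀ * (A i) * N₁)

/-- A central solution with parameter `μ` for the problems `(P_ε)` and `(D_ε)`. -/
def CentralSol (C Cbar : Matrix (Fin n) (Fin n) ℝ) (A : Fin m → Matrix (Fin n) (Fin n) ℝ)
    (b : Fin m → ℝ) (ε μ : ℝ) (X : Matrix (Fin n) (Fin n) ℝ) (y : Fin m → ℝ)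
    (S : Matrix (Fin n) (Fin n) ℝ) : Prop :=
  PrimalFeasible A b X ∧ DualFeasible C Cbar A ε y S ∧
    X * S = μ • (1 : Matrix (Fin n) (Fin n) ℝ)

/-- The Frobenius norm of a matrix. -/
def frobNorm {α β : Type*} [Fintype α] [Fintype β] (M : Matrix α β ℝ) : ℝ :=
  Real.sqrt (∑ i, ∑ j, (M i j) ^ 2)

/-- The spectral norm (induced 2-norm) of a square matrix. -/
def specNorm {N : ℕ} (M : Matrix (Fin N) (Fin N) ℝ) : ℝ :=
  ‖LinearMap.toContinuousLinearMap (Matrix.toEuclideanLin M)‖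

/-- The smallest eigenvalue of a symmetric matrix, via the Rayleigh quotient. -/
def lamMin {k : ℕ} (M : Matrix (Fin k) (Fin k) ℝ) : ℝ :=
  sInf {r : ℝ | ∃ x : Fin k → ℝ, (∑ i, (x i) ^ 2) = 1 ∧ r = x ⬝ᵥ M.mulVec x}

/-- `θ^μ`: the operator norm of the inverse of the Jacobian `J(X, y, S)` on
`S^n × ℝ^m × S^n`, characterized as the least constant `t ≥ 0` with
`‖(ΔX, Δy, ΔS)‖ ≤ t * ‖J(X,y,S)(ΔX, Δy, ΔS)‖` for all symmetric `ΔX`, `ΔS`. -/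
def thetaMu (A : Fin m → Matrix (Fin n) (Fin n) ℝ)
    (X S : Matrix (Fin n) (Fin n) ℝ) : ℝ :=
  sInf {t : ℝ | 0 ≤ t ∧ ∀ (DX DS : Matrix (Fin n) (Fin n) ℝ) (Dy : Fin m → ℝ),
    DX.IsSymm → DS.IsSymm →
    Real.sqrt (frobNorm DX ^ 2 + (∑ i, (Dy i) ^ 2) + frobNorm DS ^ 2) ≤
      t * Real.sqrt ((∑ i, (((A i) * DX).trace) ^ 2) +
        frobNorm ((∑ i, Dy i • A i) + DS) ^ 2 +
        frobNorm ((1 / 2 : ℝ) • (DX * S + S * DX + X * DS + DS * X)) ^ 2)}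

/-- A nonlinearity interval: a non-singleton open subinterval of `int(E)`, of maximal length,
on which `dim B(·)` and `dim N(·)` are constant while the optimal partition `π(·)` varies. -/
def IsNonlinearityInterval (C Cbar : Matrix (Fin n) (Fin n) ℝ)
    (A : Fin m → Matrix (Fin n) (Fin n) ℝ) (b : Fin m → ℝ) (I : Set ℝ) : Prop :=
  I ⊆ interior (Eset C Cbar A b) ∧ IsOpen I ∧ I.OrdConnected ∧
    (∃ a ∈ I, ∃ c ∈ I, a ≠ c) ∧
    (∀ ε ∈ I, ∀ ε' ∈ I, DimsMatch C Cbar A b ε ε') ∧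
    ¬ (∀ ε ∈ I, ∀ ε' ∈ I, SamePartition C Cbar A b ε ε') ∧
    ∀ I' : Set ℝ, I ⊆ I' → I' ⊆ interior (Eset C Cbar A b) → IsOpen I' → I'.OrdConnected →
      (∀ ε ∈ I', ∀ ε' ∈ I', DimsMatch C Cbar A b ε ε') → I' = I

end

section Helpers

open Topology

/-- A linear map whose kernel contains the kernel of `f` factors through `f`. -/
lemma aux_factor {V : Type*} [AddCommGroup V] [Module ℝ V] (f g : V →ₗ[ℝ] V)
    (h : ∀ x, f x = 0 → g x = 0) : ∃ T : V →ₗ[ℝ] V, ∀ x, T (f x) = g x := by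
  have hk : LinearMap.ker f ≤ LinearMap.ker g := fun x hx => by
    simpa using h x (by simpa using hx)
  obtain ⟨T, hT⟩ := LinearMap.exists_extend
    (((LinearMap.ker f).liftQ g hk).comp f.quotKerEquivRange.symm.toLinearMap)
  refine ⟨T, fun x => ?_⟩
  have h1 := LinearMap.congr_fun hT ⟨f x, LinearMap.mem_range_self f x⟩
  have h2 : f.quotKerEquivRange.symm ⟨f x, LinearMap.mem_range_self f x⟩
      = Submodule.Quotient.mk x := by
    rw [LinearEquiv.symm_apply_eq]
    rfl
  simp only [LinearMap.comp_apply, Submodule.subtype_apply, LinearEquiv.coe_coe, h2] at h1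
  simpa using h1

lemma aux_bound {n : ℕ} (T : Matrix (Fin n) (Fin n) ℝ) :
    ∃ c : ℝ, 0 ≤ c ∧ ∀ w : Fin n → ℝ, (T *ᵥ w) ⬝ᵥ (T *ᵥ w) ≤ c * (w ⬝ᵥ w) := by
  refine ⟨∑ i, ∑ j, T i j ^ 2, by positivity, fun w => ?_⟩
  rw [Finset.sum_mul]
  unfold dotProduct
  refine Finset.sum_le_sum fun i _ => ?_
  have := Finset.sum_mul_sq_le_sq_mul_sq Finset.univ (fun j => T i j) w
  simp only [Matrix.mulVec, dotProduct, ← pow_two]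
  exact this

open scoped MatrixOrder Matrix.Norms.L2Operator in
lemma aux_sqrt {n : ℕ} {P : Matrix (Fin n) (Fin n) ℝ} (hP : P.PosSemidef) :
    ∃ R : Matrix (Fin n) (Fin n) ℝ, ∀ x, x ⬝ᵥ P *ᵥ x = (R *ᵥ x) ⬝ᵥ (R *ᵥ x) := by
  obtain ⟨R, hR⟩ := CStarAlgebra.nonneg_iff_eq_star_mul_self.mp hP.nonneg
  rw [Matrix.star_eq_conjTranspose] at hR
  refine ⟨R, fun x => ?_⟩
  rw [hR, ← Matrix.mulVec_mulVec, Matrix.dotProduct_mulVec, Matrix.conjTranspose_eq_transpose_of_trivial,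
    Matrix.vecMul_transpose]

lemma aux_psd_iff {n : ℕ} {P : Matrix (Fin n) (Fin n) ℝ} :
    P.PosSemidef ↔ P.IsSymm ∧ ∀ x, 0 ≤ x ⬝ᵥ P *ᵥ x := by
  rw [Matrix.posSemidef_iff_dotProduct_mulVec, Matrix.IsHermitian,
    Matrix.conjTranspose_eq_transpose_of_trivial, Matrix.IsSymm]
  simp

lemma aux_zero {n : ℕ} {P : Matrix (Fin n) (Fin n) ℝ} (hP : P.PosSemidef) (x : Fin n → ℝ) :
    x ⬝ᵥ P *ᵥ x = 0 ↔ P *ᵥ x = 0 := by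
  simpa using hP.dotProduct_mulVec_zero_iff x

/-- If `range Q ⊆ range P` for positive semidefinite matrices then `P ⪰ t Q` for some `t > 0`. -/
lemma aux_dom {n : ℕ} {P Q : Matrix (Fin n) (Fin n) ℝ} (hP : P.PosSemidef) (hQ : Q.PosSemidef)
    (h : LinearMap.range Q.mulVecLin ≤ LinearMap.range P.mulVecLin) :
    ∃ t : ℝ, 0 < t ∧ (P - t • Q).PosSemidef := by
  have hPs := (aux_psd_iff.1 hP).1
  have hQs := (aux_psd_iff.1 hQ).1
  have hker : ∀ x, P *ᵥ x = 0 → Q *ᵥ x = 0 := by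
    intro x hx
    obtain ⟨z, hz⟩ := h (LinearMap.mem_range_self Q.mulVecLin x)
    simp only [Matrix.mulVecLin_apply] at hz
    rw [← aux_zero hQ, ← hz, Matrix.dotProduct_mulVec, ← Matrix.mulVec_transpose, hPs.eq, hx,
      zero_dotProduct]
  obtain ⟨R, hR⟩ := aux_sqrt hP
  obtain ⟨B, hB⟩ := aux_sqrt hQ
  have hRB : ∀ x, R.mulVecLin x = 0 → B.mulVecLin x = 0 := by
    intro x hx
    simp only [Matrix.mulVecLin_apply] at hx ⊢
    have h1 : x ⬝ᵥ P *ᵥ x = 0 := by rw [hR, hx, zero_dotProduct]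
    have h2 := hker x ((aux_zero hP x).1 h1)
    have h3 := (aux_zero hQ x).2 h2
    rw [hB] at h3
    exact dotProduct_self_eq_zero.1 h3
  obtain ⟨T, hT⟩ := aux_factor _ _ hRB
  obtain ⟨c, hc, hcb⟩ := aux_bound (LinearMap.toMatrix' T)
  refine ⟨1 / (c + 1), by positivity, aux_psd_iff.2 ⟨?_, fun x => ?_⟩⟩
  · exact hPs.sub (hQs.smul _)
  · have h1 : x ⬝ᵥ Q *ᵥ x ≤ c * (x ⬝ᵥ P *ᵥ x) := by
      have := hcb (R *ᵥ x)
      rw [LinearMap.toMatrix'_mulVec] at this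
      have h4 := hT x
      simp only [Matrix.mulVecLin_apply] at h4
      rw [h4] at this
      rw [hR, hB]
      exact this
    have h0 := (aux_psd_iff.1 hP).2 x
    rw [Matrix.sub_mulVec, Matrix.smul_mulVec, dotProduct_sub, dotProduct_smul, smul_eq_mul,
      sub_nonneg, div_mul_eq_mul_div, div_le_iff₀ (by positivity)]
    linarith

lemma aux_range {n : ℕ} {P Q : Matrix (Fin n) (Fin n) ℝ} (hP : P.PosSemidef) (hQ : Q.PosSemidef)
    (h : LinearMap.range P.mulVecLin = LinearMap.range Q.mulVecLin)
    {ρ : ℝ} (hρ : ρ ∈ Set.Icc (0 : ℝ) 1) :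
    LinearMap.range (ρ • P + (1 - ρ) • Q).mulVecLin = LinearMap.range P.mulVecLin := by
  rcases hρ.1.eq_or_lt with h0 | h0
  · subst h0
    simp [h]
  apply Submodule.eq_of_le_of_finrank_le
  · rintro _ ⟨x, rfl⟩
    simp only [Matrix.mulVecLin_apply, Matrix.add_mulVec, Matrix.smul_mulVec]
    refine Submodule.add_mem _ (Submodule.smul_mem _ _ ⟨x, rfl⟩) (Submodule.smul_mem _ _ ?_)
    rw [h]
    exact ⟨x, rfl⟩
  · have hk : LinearMap.ker (ρ • P + (1 - ρ) • Q).mulVecLin ≤ LinearMap.ker P.mulVecLin := by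
      intro x hx
      simp only [LinearMap.mem_ker, Matrix.mulVecLin_apply] at hx ⊢
      have h1 : x ⬝ᵥ (ρ • P + (1 - ρ) • Q) *ᵥ x = 0 := by rw [hx, dotProduct_zero]
      rw [Matrix.add_mulVec, Matrix.smul_mulVec, Matrix.smul_mulVec, dotProduct_add,
        dotProduct_smul, dotProduct_smul, smul_eq_mul, smul_eq_mul] at h1
      have hp := (aux_psd_iff.1 hP).2 x
      have hq := (aux_psd_iff.1 hQ).2 x
      have h2 := mul_nonneg (sub_nonneg.2 hρ.2) hq
      have h3 := mul_nonneg h0.le hp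
      rw [← aux_zero hP]
      have h4 : ρ * (x ⬝ᵥ P *ᵥ x) = 0 := by linarith
      exact (mul_eq_zero.1 h4).resolve_left h0.ne'
    have e1 := LinearMap.finrank_range_add_finrank_ker (ρ • P + (1 - ρ) • Q).mulVecLin
    have e2 := LinearMap.finrank_range_add_finrank_ker P.mulVecLin
    have e3 := Submodule.finrank_mono hk
    omega

/-- Neighbourhood form of membership in the intrinsic interior. -/
lemma aux_mem_ii {E : Type*} [NormedAddCommGroup E] [NormedSpace ℝ E] {K : Set E} {x : E} :
    x ∈ intrinsicInterior ℝ K ↔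
      x ∈ affineSpan ℝ K ∧ ∃ U ∈ 𝓝 x, ∀ u ∈ U, u ∈ affineSpan ℝ K → u ∈ K := by
  rw [mem_intrinsicInterior]
  constructor
  · rintro ⟨y, hy, rfl⟩
    refine ⟨y.2, ?_⟩
    rw [mem_interior_iff_mem_nhds, mem_nhds_subtype] at hy
    obtain ⟨U, hU, hUK⟩ := hy
    exact ⟨U, hU, fun u hu hua => hUK (a := ⟨u, hua⟩) hu⟩
  · rintro ⟨hx, U, hU, hUK⟩
    refine ⟨⟨x, hx⟩, ?_, rfl⟩
    rw [mem_interior_iff_mem_nhds, mem_nhds_subtype]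
    exact ⟨U, hU, fun u hu => hUK u hu u.2⟩

/-- From a relative interior point one can move a little beyond it, away from any point of `K`. -/
lemma aux_extend {E : Type*} [NormedAddCommGroup E] [NormedSpace ℝ E] {K : Set E} {x : E}
    (hx : x ∈ intrinsicInterior ℝ K) {z : E} (hz : z ∈ K) :
    ∃ t : ℝ, 0 < t ∧ x - t • (z - x) ∈ K := by
  obtain ⟨hxa, U, hU, hUK⟩ := aux_mem_ii.1 hx
  have hcont : Continuous fun t : ℝ => x - t • (z - x) := by fun_prop
  have h1 : ∀ᶠ t in 𝓝 (0 : ℝ), x - t • (z - x) ∈ U :=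
    hcont.continuousAt.eventually_mem (by simpa using hU)
  have h2 : ∀ᶠ t in 𝓝[>] (0 : ℝ), x - t • (z - x) ∈ U := h1.filter_mono nhdsWithin_le_nhds
  obtain ⟨t, ht, ht0⟩ := (h2.and self_mem_nhdsWithin).exists
  refine ⟨t, ht0, hUK _ ht ?_⟩
  have := AffineMap.lineMap_mem (-t) hxa (subset_affineSpan ℝ K hz)
  rw [AffineMap.lineMap_apply] at this
  convert this using 1
  simp only [vsub_eq_sub, vadd_eq_add]
  module

lemma aux_ii_of_extend {E : Type*} [NormedAddCommGroup E] [NormedSpace ℝ E]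
    [FiniteDimensional ℝ E] {K : Set E} (hK : Convex ℝ K) {x : E} (hx : x ∈ K)
    (h : ∀ z ∈ K, ∃ t : ℝ, 0 < t ∧ x - t • (z - x) ∈ K) : x ∈ intrinsicInterior ℝ K := by
  obtain ⟨w, hw⟩ := Set.Nonempty.intrinsicInterior hK ⟨x, hx⟩
  have hwK := intrinsicInterior_subset hw
  obtain ⟨hwa, U, hU, hUK⟩ := aux_mem_ii.1 hw
  obtain ⟨t, ht, hu⟩ := h w hwK
  set u := x - t • (w - x) with hudef
  rw [aux_mem_ii]
  refine ⟨subset_affineSpan ℝ K hx, ?_⟩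
  -- homothety with centre `u` and ratio `(1 + t) / t` sends `x` to `w`
  have hcont : Continuous fun p : E => u + ((1 + t) / t) • (p - u) := by fun_prop
  have hxw : u + ((1 + t) / t) • (x - u) = w := by
    have : x - u = t • (w - x) := by rw [hudef]; module
    rw [this, smul_smul, div_mul_cancel₀ _ ht.ne', hudef]
    module
  refine ⟨(fun p : E => u + ((1 + t) / t) • (p - u)) ⁻¹' U,
    hcont.continuousAt.preimage_mem_nhds (by simpa only [hxw] using hU), fun p hp hpa => ?_⟩
  have hq : u + ((1 + t) / t) • (p - u) ∈ K := by
    refine hUK _ hp ?_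
    have := AffineMap.lineMap_mem ((1 + t) / t) (subset_affineSpan ℝ K hu) hpa
    rw [AffineMap.lineMap_apply] at this
    convert this using 1
    simp only [vsub_eq_sub, vadd_eq_add]
    module
  have := hK hq hu (a := t / (1 + t)) (b := 1 / (1 + t)) (by positivity) (by positivity)
    (by field_simp; ring)
  convert this using 1
  rw [smul_add, smul_smul, show t / (1 + t) * ((1 + t) / t) = 1 by field_simp, one_smul]
  have e : t / (1 + t) + 1 / (1 + t) = 1 := by field_simp; ring
  calc p = (1 : ℝ) • u + (p - u) := by module
    _ = (t / (1 + t) + 1 / (1 + t)) • u + (p - u) := by rw [e]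
    _ = _ := by module

/-- Abstract optimal set: minimise `f` subject to `g p = β` and `σ p ⪰ 0`. -/
def auxOpt {E F : Type*} [AddCommGroup E] [Module ℝ E] [AddCommGroup F] [Module ℝ F] {n : ℕ}
    (σ : E →ₗ[ℝ] Matrix (Fin n) (Fin n) ℝ) (g : E →ₗ[ℝ] F) (β : F) (f : E →ₗ[ℝ] ℝ) : Set E :=
  {p | (g p = β ∧ (σ p).PosSemidef) ∧ ∀ q, g q = β → (σ q).PosSemidef → f p ≤ f q}

lemma auxOpt_convex {E F : Type*} [AddCommGroup E] [Module ℝ E] [AddCommGroup F] [Module ℝ F]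
    {n : ℕ} (σ : E →ₗ[ℝ] Matrix (Fin n) (Fin n) ℝ) (g : E →ₗ[ℝ] F) (β : F) (f : E →ₗ[ℝ] ℝ) :
    Convex ℝ (auxOpt σ g β f) := by
  rintro p ⟨⟨hp1, hp2⟩, hp3⟩ q ⟨⟨hq1, hq2⟩, hq3⟩ a c ha hc hac
  refine ⟨⟨?_, ?_⟩, fun r hr1 hr2 => ?_⟩
  · rw [map_add, map_smul, map_smul, hp1, hq1, ← add_smul, hac, one_smul]
  · rw [map_add, map_smul, map_smul]
    exact (hp2.smul ha).add (hq2.smul hc)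
  · rw [map_add, map_smul, map_smul, smul_eq_mul, smul_eq_mul]
    have h1 := mul_le_mul_of_nonneg_left (hp3 r hr1 hr2) ha
    have h2 := mul_le_mul_of_nonneg_left (hq3 r hr1 hr2) hc
    have : f r = a * f r + c * f r := by rw [← add_mul, hac, one_mul]
    linarith

/-- The common core of the primal and dual statements. -/
lemma aux_core {E F : Type*} [NormedAddCommGroup E] [NormedSpace ℝ E] [FiniteDimensional ℝ E]
    [AddCommGroup F] [Module ℝ F] {n : ℕ}
    (σ : E →ₗ[ℝ] Matrix (Fin n) (Fin n) ℝ) (g : E →ₗ[ℝ] F) (β₁ β₂ : F) (f₁ f₂ : E →ₗ[ℝ] ℝ)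
    (p₁ p₂ : E) (h₁ : p₁ ∈ intrinsicInterior ℝ (auxOpt σ g β₁ f₁))
    (h₂ : p₂ ∈ intrinsicInterior ℝ (auxOpt σ g β₂ f₂))
    (hr : LinearMap.range (σ p₁).mulVecLin = LinearMap.range (σ p₂).mulVecLin)
    (ρ : ℝ) (hρ : ρ ∈ Set.Icc (0 : ℝ) 1) :
    ρ • p₁ + (1 - ρ) • p₂ ∈ intrinsicInterior ℝ
      (auxOpt σ g (ρ • β₁ + (1 - ρ) • β₂) (ρ • f₁ + (1 - ρ) • f₂)) := by
  rcases hρ.1.eq_or_lt with h0 | h0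
  · subst h0
    simpa using h₂
  rcases hρ.2.eq_or_lt with h1 | h1
  · subst h1
    simpa using h₁
  have h1' : 0 < 1 - ρ := sub_pos.2 h1
  obtain ⟨⟨hg₁, hs₁⟩, ho₁⟩ := intrinsicInterior_subset h₁
  obtain ⟨⟨hg₂, hs₂⟩, ho₂⟩ := intrinsicInterior_subset h₂
  set pr := ρ • p₁ + (1 - ρ) • p₂ with hpr
  have hσ : σ pr = ρ • σ p₁ + (1 - ρ) • σ p₂ := by simp [hpr]
  have hgr : g pr = ρ • β₁ + (1 - ρ) • β₂ := by simp [hpr, hg₁, hg₂]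
  have hsr : (σ pr).PosSemidef := by
    rw [hσ]; exact (hs₁.smul h0.le).add (hs₂.smul h1'.le)
  have hrr : LinearMap.range (σ pr).mulVecLin = LinearMap.range (σ p₁).mulVecLin := by
    rw [hσ]; exact aux_range hs₁ hs₂ hr hρ
  obtain ⟨t₁, ht₁, hd₁⟩ := aux_dom hs₁ hsr hrr.le
  obtain ⟨t₂, ht₂, hd₂⟩ := aux_dom hs₂ hsr (hrr.trans hr).le
  -- feasible directions at `pr` are feasible directions at `p₁` and `p₂`
  have key : ∀ (p : E) (β : F) (t : ℝ), 0 < t → g p = β → (σ p - t • σ pr).PosSemidef →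
      ∀ q, g q = ρ • β₁ + (1 - ρ) • β₂ → (σ q).PosSemidef →
        g (p + t • (q - pr)) = β ∧ (σ (p + t • (q - pr))).PosSemidef := by
    intro p β t ht hp hpd q hq1 hq2
    constructor
    · rw [map_add, map_smul, map_sub, hq1, hgr, sub_self, smul_zero, add_zero, hp]
    · have : σ (p + t • (q - pr)) = (σ p - t • σ pr) + t • σ q := by
        rw [map_add, map_smul, map_sub]; module
      rw [this]
      exact hpd.add (hq2.smul ht.le)
  have hf : ∀ q, g q = ρ • β₁ + (1 - ρ) • β₂ → (σ q).PosSemidef →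
      0 ≤ f₁ (q - pr) ∧ 0 ≤ f₂ (q - pr) := by
    intro q hq1 hq2
    constructor
    · have ⟨a, c⟩ := key p₁ β₁ t₁ ht₁ hg₁ hd₁ q hq1 hq2
      have := ho₁ _ a c
      rw [map_add, map_smul, smul_eq_mul] at this
      exact (mul_nonneg_iff_of_pos_left ht₁).1 (by linarith)
    · have ⟨a, c⟩ := key p₂ β₂ t₂ ht₂ hg₂ hd₂ q hq1 hq2
      have := ho₂ _ a c
      rw [map_add, map_smul, smul_eq_mul] at this
      exact (mul_nonneg_iff_of_pos_left ht₂).1 (by linarith)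
  have hopt : pr ∈ auxOpt σ g (ρ • β₁ + (1 - ρ) • β₂) (ρ • f₁ + (1 - ρ) • f₂) := by
    refine ⟨⟨hgr, hsr⟩, fun q hq1 hq2 => ?_⟩
    obtain ⟨a, c⟩ := hf q hq1 hq2
    have : 0 ≤ (ρ • f₁ + (1 - ρ) • f₂) (q - pr) := by
      simp only [LinearMap.add_apply, LinearMap.smul_apply, smul_eq_mul]
      positivity
    rw [map_sub] at this
    linarith
  refine aux_ii_of_extend (auxOpt_convex _ _ _ _) hopt fun z hz => ?_
  obtain ⟨⟨hz1, hz2⟩, hz3⟩ := hz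
  obtain ⟨a, c⟩ := hf z hz1 hz2
  have hle : (ρ • f₁ + (1 - ρ) • f₂) (z - pr) ≤ 0 := by
    rw [map_sub]; linarith [hz3 pr hgr hsr]
  have hle' := hle
  simp only [LinearMap.add_apply, LinearMap.smul_apply, smul_eq_mul] at hle'
  have hf1 : f₁ (z - pr) = 0 := by
    have := mul_nonneg h0.le a
    have := mul_nonneg h1'.le c
    have h4 : ρ * f₁ (z - pr) = 0 := by linarith
    exact (mul_eq_zero.1 h4).resolve_left h0.ne'
  have hmem : p₁ + t₁ • (z - pr) ∈ auxOpt σ g β₁ f₁ := by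
    refine ⟨key p₁ β₁ t₁ ht₁ hg₁ hd₁ z hz1 hz2, fun q hq1 hq2 => ?_⟩
    rw [map_add, map_smul, hf1, smul_zero, add_zero]
    exact ho₁ q hq1 hq2
  obtain ⟨s, hs, ⟨_, hsp⟩, _⟩ := aux_extend h₁ hmem
  refine ⟨ρ * (s * t₁), by positivity, ⟨?_, ?_⟩, fun q hq1 hq2 => ?_⟩
  · rw [map_sub, map_smul, map_sub, hz1, hgr, sub_self, smul_zero, sub_zero]
  · have : σ (pr - (ρ * (s * t₁)) • (z - pr)) =
        ρ • σ (p₁ - s • (p₁ + t₁ • (z - pr) - p₁)) + (1 - ρ) • σ p₂ := by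
      rw [map_sub, hσ, add_sub_cancel_left, map_sub σ p₁]
      simp only [map_smul]
      module
    rw [this]
    exact (hsp.smul h0.le).add (hs₂.smul h1'.le)
  · have hge : 0 ≤ (ρ • f₁ + (1 - ρ) • f₂) (z - pr) := by
      simp only [LinearMap.add_apply, LinearMap.smul_apply, smul_eq_mul]
      positivity
    rw [map_sub _ pr, map_smul, le_antisymm hle hge, smul_zero, sub_zero]
    exact hopt.2 q hq1 hq2

/-- The primal objective as a linear functional. -/
def auxTr {n : ℕ} (M : Matrix (Fin n) (Fin n) ℝ) : Matrix (Fin n) (Fin n) ℝ →ₗ[ℝ] ℝ :=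
  (Matrix.traceLinearMap (Fin n) ℝ ℝ).comp (LinearMap.mulLeft ℝ M)

lemma auxTr_apply {n : ℕ} (M X : Matrix (Fin n) (Fin n) ℝ) : auxTr M X = (M * X).trace := rfl

lemma aux_primal {n m : ℕ} (C Cbar : Matrix (Fin n) (Fin n) ℝ)
    (A : Fin m → Matrix (Fin n) (Fin n) ℝ) (b : Fin m → ℝ) (ε : ℝ) :
    PrimalOpt C Cbar A b ε =
      auxOpt LinearMap.id (LinearMap.pi fun i => auxTr (A i)) b (auxTr (C + ε • Cbar)) := by
  have hfe : ∀ X, PrimalFeasible A b X ↔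
      (LinearMap.pi (fun i => auxTr (A i)) X = b ∧ X.PosSemidef) := by
    intro X
    unfold PrimalFeasible
    rw [funext_iff]
    simp only [LinearMap.pi_apply, auxTr_apply]
    exact ⟨fun h => h.2, fun h => ⟨(aux_psd_iff.1 h.2).1, h⟩⟩
  ext X
  simp only [PrimalOpt, auxOpt, Set.mem_setOf_eq, hfe, auxTr_apply, LinearMap.id_apply, and_imp]

/-- The dual constraint map. -/
def auxG {n m : ℕ} (A : Fin m → Matrix (Fin n) (Fin n) ℝ) :
    ((Fin m → ℝ) × Matrix (Fin n) (Fin n) ℝ) →ₗ[ℝ] Matrix (Fin n) (Fin n) ℝ :=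
  LinearMap.coprod (Fintype.linearCombination ℝ A) LinearMap.id

/-- The (negated) dual objective. -/
def auxF {n m : ℕ} (b : Fin m → ℝ) :
    ((Fin m → ℝ) × Matrix (Fin n) (Fin n) ℝ) →ₗ[ℝ] ℝ :=
  -((Fintype.linearCombination ℝ b).comp (LinearMap.fst ℝ _ _))

lemma aux_dual {n m : ℕ} (C Cbar : Matrix (Fin n) (Fin n) ℝ)
    (A : Fin m → Matrix (Fin n) (Fin n) ℝ) (b : Fin m → ℝ) (ε : ℝ) :
    DualOpt C Cbar A b ε =
      auxOpt (LinearMap.snd ℝ _ _) (auxG A) (C + ε • Cbar) (auxF b) := by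
  have hfe : ∀ y S, DualFeasible C Cbar A ε y S ↔
      (auxG A (y, S) = C + ε • Cbar ∧ S.PosSemidef) := by
    intro y S
    unfold DualFeasible auxG
    simp only [LinearMap.coprod_apply, Fintype.linearCombination_apply, LinearMap.id_apply]
    exact ⟨fun h => h.2, fun h => ⟨(aux_psd_iff.1 h.2).1, h⟩⟩
  have hF : ∀ p : (Fin m → ℝ) × Matrix (Fin n) (Fin n) ℝ,
      auxF b p = -∑ i, b i * p.1 i := by
    intro p
    simp [auxF, Fintype.linearCombination_apply, mul_comm]
  ext ⟨y, S⟩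
  simp only [DualOpt, auxOpt, Set.mem_setOf_eq, hfe, hF, LinearMap.snd_apply, and_imp,
    neg_le_neg_iff, Prod.forall]

end Helpers

/-- convex combinations along an invariancy set are maximally complementary and
leave the optimal partition unchanged. -/
theorem stmt0 {n m : ℕ} (C Cbar : Matrix (Fin n) (Fin n) ℝ)
    (A : Fin m → Matrix (Fin n) (Fin n) ℝ) (b : Fin m → ℝ)
    (hSA : StandingAssumptions C Cbar A b)
    (ε' ε'' : ℝ) (hε' : ε' ∈ interior (Eset C Cbar A b))
    (hε'' : ε'' ∈ interior (Eset C Cbar A b))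
    (X' X'' S' S'' : Matrix (Fin n) (Fin n) ℝ) (y' y'' : Fin m → ℝ)
    (hmc' : MaxComp C Cbar A b ε' X' y' S')
    (hmc'' : MaxComp C Cbar A b ε'' X'' y'' S'')
    (hB : LinearMap.range X'.mulVecLin = LinearMap.range X''.mulVecLin)
    (hN : LinearMap.range S'.mulVecLin = LinearMap.range S''.mulVecLin)
    (ρ : ℝ) (hρ : ρ ∈ Set.Icc (0 : ℝ) 1) :
    MaxComp C Cbar A b (ρ * ε' + (1 - ρ) * ε'')
        (ρ • X' + (1 - ρ) • X'') (ρ • y' + (1 - ρ) • y'') (ρ • S' + (1 - ρ) • S'') ∧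
      LinearMap.range (ρ • X' + (1 - ρ) • X'').mulVecLin = LinearMap.range X'.mulVecLin ∧
      LinearMap.range (ρ • S' + (1 - ρ) • S'').mulVecLin = LinearMap.range S'.mulVecLin := by
  letI : NormedAddCommGroup (Matrix (Fin n) (Fin n) ℝ) := Matrix.normedAddCommGroup
  letI : NormedSpace ℝ (Matrix (Fin n) (Fin n) ℝ) := Matrix.normedSpace
  obtain ⟨hp', hd'⟩ := hmc'
  obtain ⟨hp'', hd''⟩ := hmc''
  have hX' : X'.PosSemidef := (intrinsicInterior_subset hp').1.2.2
  have hX'' : X''.PosSemidef := (intrinsicInterior_subset hp'').1.2.2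
  have hS' : S'.PosSemidef := (intrinsicInterior_subset hd').1.2.2
  have hS'' : S''.PosSemidef := (intrinsicInterior_subset hd'').1.2.2
  have hC : C + (ρ * ε' + (1 - ρ) * ε'') • Cbar =
      ρ • (C + ε' • Cbar) + (1 - ρ) • (C + ε'' • Cbar) := by module
  refine ⟨⟨?_, ?_⟩, aux_range hX' hX'' hB hρ, aux_range hS' hS'' hN hρ⟩
  · rw [aux_primal] at hp' hp'' ⊢
    have := aux_core _ _ _ _ _ _ _ _ hp' hp'' hB ρ hρ
    have e1 : ρ • b + (1 - ρ) • b = b := by module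
    have e2 : ρ • auxTr (C + ε' • Cbar) + (1 - ρ) • auxTr (C + ε'' • Cbar) =
        auxTr (C + (ρ * ε' + (1 - ρ) * ε'') • Cbar) := by
      rw [hC]
      ext1 X
      simp only [LinearMap.add_apply, LinearMap.smul_apply, auxTr_apply, Matrix.add_mul,
        Matrix.smul_mul, Matrix.trace_add, Matrix.trace_smul]
    rw [e1, e2] at this
    exact this
  · rw [aux_dual] at hd' hd'' ⊢
    have := aux_core _ _ _ _ _ _ _ _ hd' hd'' hN ρ hρ
    have e1 : ρ • auxF (n := n) b + (1 - ρ) • auxF b = auxF b := by module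
    rw [e1, ← hC] at this
    exact this
end

section
/- Let ε̄ ∈ int(E), let Q_B be a matrix whose columns form an orthonormal basis of B(ε̄) and Q_N a matrix whose columns form an orthonormal basis of N(ε̄). Then for ε ∈ int(E), π(ε) = π(ε̄) if and only if there exist a symmetric positive definite matrix U_X of size dim B(ε̄), a vector y ∈ ℝ^m, and a symmetric positive definite matrix U_S of size dim N(ε̄) such that ⟨A^i, Q_B U_X Q_B^T⟩ = b_i for i = 1,…,m and Σ_i y_i A^i + Q_N U_S Q_N^T = C + ε C̄. -/
open Matrix Set

/-! ### Helper lemmas -/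

/-- Positive definiteness of the quadratic form, without symmetry. -/
def QPos {k : ℕ} (M : Matrix (Fin k) (Fin k) ℝ) : Prop :=
  ∀ x : Fin k → ℝ, x ≠ 0 → 0 < x ⬝ᵥ M *ᵥ x

lemma QPos.of_posDef {k : ℕ} {M : Matrix (Fin k) (Fin k) ℝ} (h : M.PosDef) : QPos M := by
  intro x hx
  simpa using h.dotProduct_mulVec_pos hx

lemma QPos.posDef {k : ℕ} {M : Matrix (Fin k) (Fin k) ℝ} (h : QPos M) (hs : M.IsSymm) :
    M.PosDef := by
  refine PosDef.of_dotProduct_mulVec_pos ?_ ?_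
  · simpa [IsHermitian, IsSymm] using hs
  · intro x hx
    simpa using h x hx

lemma isOpen_QPos (k : ℕ) : IsOpen {M : Matrix (Fin k) (Fin k) ℝ | QPos M} := by
  rw [isOpen_iff_mem_nhds]
  intro M hM
  have hK : IsCompact (Metric.sphere (0 : Fin k → ℝ) 1) := isCompact_sphere _ _
  have hc : Continuous (fun z : Matrix (Fin k) (Fin k) ℝ × (Fin k → ℝ) => z.2 ⬝ᵥ z.1 *ᵥ z.2) := by
    fun_prop
  have := hK.eventually_forall_of_forall_eventually (x₀ := M)
    (P := fun (N : Matrix (Fin k) (Fin k) ℝ) x => 0 < x ⬝ᵥ N *ᵥ x) (by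
      intro x hx
      have hx0 : x ≠ 0 := by
        rintro rfl
        simp at hx
      exact hc.continuousAt.eventually (lt_mem_nhds (hM x hx0)))
  filter_upwards [this] with N hN x hx
  have hnx : 0 < ‖x‖ := norm_pos_iff.2 hx
  have h1 := hN (‖x‖⁻¹ • x) (by simp [norm_smul, hnx.ne'])
  rw [mulVec_smul, dotProduct_smul, smul_dotProduct] at h1
  simp only [smul_eq_mul] at h1
  have h2 : 0 < ‖x‖⁻¹ := inv_pos.2 hnx
  exact (pos_iff_pos_of_mul_pos ((mul_pos_iff_of_pos_left h2).1 h1)).1 h2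

lemma convex_QPos (k : ℕ) : Convex ℝ {M : Matrix (Fin k) (Fin k) ℝ | QPos M} := by
  intro M hM N hN a b ha hb hab x hx
  have h1 := hM x hx
  have h2 := hN x hx
  rw [add_mulVec, dotProduct_add, smul_mulVec, smul_mulVec, dotProduct_smul, dotProduct_smul]
  simp only [smul_eq_mul]
  rcases ha.eq_or_lt with rfl | ha'
  · have : b = 1 := by linarith
    subst this
    linarith
  · have := mul_pos ha' h1
    have := mul_nonneg hb h2.le
    linarith

lemma psd_exists {k : ℕ} {X : Matrix (Fin k) (Fin k) ℝ} (hX : X.PosSemidef) :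
    ∃ B : Matrix (Fin k) (Fin k) ℝ, X = Bᵀ * B := by
  open scoped MatrixOrder in
  obtain ⟨B, hB⟩ := CStarAlgebra.nonneg_iff_eq_star_mul_self.mp hX.nonneg
  exact ⟨B, by simpa [star_eq_conjTranspose] using hB⟩

lemma psd_trace_nonneg {k : ℕ} {S X : Matrix (Fin k) (Fin k) ℝ} (hS : S.PosSemidef)
    (hX : X.PosSemidef) : 0 ≤ (S * X).trace := by
  obtain ⟨B, rfl⟩ := psd_exists hX
  have := (hS.mul_mul_conjTranspose_same B).trace_nonneg
  rw [← Matrix.mul_assoc, trace_mul_comm, ← Matrix.mul_assoc]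
  simpa using this

lemma psd_ker {k : ℕ} {S : Matrix (Fin k) (Fin k) ℝ} (hS : S.PosSemidef) {x : Fin k → ℝ}
    (h : x ⬝ᵥ S *ᵥ x = 0) : S *ᵥ x = 0 :=
  (hS.dotProduct_mulVec_zero_iff x).1 (by simpa using h)

lemma psd_mul_zero {k : ℕ} {S X : Matrix (Fin k) (Fin k) ℝ} (hS : S.PosSemidef)
    (hX : X.PosSemidef) (h : (S * X).trace = 0) : S * X = 0 := by
  obtain ⟨B, rfl⟩ := psd_exists hX
  have h1 : (B * S * Bᵀ) = 0 := by
    have := hS.mul_mul_conjTranspose_same B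
    rw [conjTranspose_eq_transpose_of_trivial] at this
    rw [← this.trace_eq_zero_iff]
    rw [← Matrix.mul_assoc, trace_mul_comm, ← Matrix.mul_assoc] at h
    exact h
  have h2 : S * Bᵀ = 0 := by
    apply Matrix.ext_of_mulVec_single
    intro i
    rw [← mulVec_mulVec, zero_mulVec]
    apply psd_ker hS
    have : B *ᵥ (S *ᵥ (Bᵀ *ᵥ Pi.single i 1)) = 0 := by
      rw [mulVec_mulVec, mulVec_mulVec, h1, zero_mulVec]
    rw [mulVec_transpose, ← dotProduct_mulVec, ← mulVec_transpose, this, dotProduct_zero]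
  rw [← Matrix.mul_assoc, h2, Matrix.zero_mul]

lemma symm_mul_zero {k : ℕ} {S X : Matrix (Fin k) (Fin k) ℝ} (hS : S.IsSymm)
    (hX : X.IsSymm) (h : S * X = 0) : X * S = 0 := by
  have := congrArg transpose h
  rwa [transpose_mul, hS.eq, hX.eq, transpose_zero] at this

/-- Multiplying by `M` and taking the trace, as a linear functional. -/
def trL {k : ℕ} (M : Matrix (Fin k) (Fin k) ℝ) : Matrix (Fin k) (Fin k) ℝ →ₗ[ℝ] ℝ where
  toFun X := (M * X).trace
  map_add' X Y := by rw [Matrix.mul_add, trace_add]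
  map_smul' c X := by simp

lemma trL_apply {k : ℕ} (M X : Matrix (Fin k) (Fin k) ℝ) : trL M X = (M * X).trace := rfl

lemma trL_vec {k : ℕ} (M : Matrix (Fin k) (Fin k) ℝ) (x : Fin k → ℝ) :
    trL M (vecMulVec x x) = x ⬝ᵥ M *ᵥ x := by
  rw [trL_apply, mul_vecMulVec, trace_vecMulVec, dotProduct_comm]

lemma trL_one_sym {k : ℕ} {M : Matrix (Fin k) (Fin k) ℝ} (hM : M.IsSymm)
    (X : Matrix (Fin k) (Fin k) ℝ) : trL M Xᵀ = trL M X := by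
  rw [trL_apply, trL_apply, ← trace_transpose, transpose_mul, transpose_transpose, hM.eq,
    trace_mul_comm]

lemma QPos.symPart {k : ℕ} {M : Matrix (Fin k) (Fin k) ℝ} (h : QPos M) :
    ((1 / 2 : ℝ) • (M + Mᵀ)).PosDef := by
  have hs : ((1 / 2 : ℝ) • (M + Mᵀ)).IsSymm := by
    simp [IsSymm, add_comm]
  refine QPos.posDef ?_ hs
  intro x hx
  have h1 := h x hx
  have h2 : x ⬝ᵥ Mᵀ *ᵥ x = x ⬝ᵥ M *ᵥ x := by
    rw [mulVec_transpose, dotProduct_comm, ← dotProduct_mulVec]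
  rw [smul_mulVec, add_mulVec, dotProduct_smul, dotProduct_add, h2, smul_eq_mul]
  linarith

lemma QPos.smul {k : ℕ} {M : Matrix (Fin k) (Fin k) ℝ} (h : QPos M) {c : ℝ} (hc : 0 < c) :
    QPos (c • M) := by
  intro x hx
  rw [smul_mulVec, dotProduct_smul, smul_eq_mul]
  exact mul_pos hc (h x hx)

lemma exists_lin {n m : ℕ} (A : Fin m → Matrix (Fin n) (Fin n) ℝ)
    (g : Matrix (Fin n) (Fin n) ℝ →ₗ[ℝ] ℝ)
    (h : ∀ D, (∀ i, trL (A i) D = 0) → g D = 0) :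
    ∃ y : Fin m → ℝ, g = ∑ i, y i • trL (A i) := by
  have : g ∈ Submodule.span ℝ (Set.range fun i => trL (A i)) := by
    apply mem_span_of_iInf_ker_le_ker
    intro D hD
    simp only [Submodule.mem_iInf, LinearMap.mem_ker] at hD ⊢
    exact h D hD
  obtain ⟨c, hc⟩ := (Submodule.mem_span_range_iff_exists_fun ℝ).1 this
  exact ⟨c, hc.symm⟩

lemma exists_lin' {n m : ℕ} (A : Fin m → Matrix (Fin n) (Fin n) ℝ) (C : Matrix (Fin n) (Fin n) ℝ)
    (g : Matrix (Fin n) (Fin n) ℝ →ₗ[ℝ] ℝ)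
    (h : ∀ D, (∀ i, trL (A i) D = 0) → trL C D = 0 → g D = 0) :
    ∃ (l : ℝ) (y : Fin m → ℝ), g = l • trL C + ∑ i, y i • trL (A i) := by
  obtain ⟨y, hy⟩ := exists_lin (Fin.cons C A : Fin (m + 1) → Matrix (Fin n) (Fin n) ℝ) g (by
    intro D hD
    exact h D (fun i => by simpa using hD i.succ) (by simpa using hD 0))
  refine ⟨y 0, fun i => y i.succ, ?_⟩
  rw [hy, Fin.sum_univ_succ]
  simp

lemma trL_sum {n m : ℕ} (A : Fin m → Matrix (Fin n) (Fin n) ℝ) (y : Fin m → ℝ)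
    (C X : Matrix (Fin n) (Fin n) ℝ) :
    trL (C - ∑ i, y i • A i) X = trL C X - ∑ i, y i * trL (A i) X := by
  simp only [trL_apply]
  rw [Matrix.sub_mul, trace_sub, Matrix.sum_mul, trace_sum]
  simp

lemma sub_isSymm {n m : ℕ} {A : Fin m → Matrix (Fin n) (Fin n) ℝ} (hA : ∀ i, (A i).IsSymm)
    (y : Fin m → ℝ) {C : Matrix (Fin n) (Fin n) ℝ} (hC : C.IsSymm) :
    (C - ∑ i, y i • A i).IsSymm := by
  unfold IsSymm
  rw [transpose_sub, transpose_sum, hC.eq]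
  congr 1
  refine Finset.sum_congr rfl fun i _ => ?_
  rw [transpose_smul, (hA i).eq]

lemma strong_duality {n m : ℕ} {A : Fin m → Matrix (Fin n) (Fin n) ℝ} {b : Fin m → ℝ}
    {C X0 X : Matrix (Fin n) (Fin n) ℝ} (hC : C.IsSymm) (hA : ∀ i, (A i).IsSymm)
    (hX0 : PrimalFeasible A b X0) (hX0p : X0.PosDef) (hX : PrimalFeasible A b X)
    (hopt : ∀ X', PrimalFeasible A b X' → trL C X ≤ trL C X') :
    ∃ y : Fin m → ℝ, (C - ∑ i, y i • A i).PosSemidef ∧ trL (C - ∑ i, y i • A i) X ≤ 0 := by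
  set V : Set (Matrix (Fin n) (Fin n) ℝ) :=
    {Z | (∀ i, trL (A i) Z = b i) ∧ trL C Z < trL C X} with hV
  have hbX : ∀ i, trL (A i) X = b i := hX.2.1
  rcases V.eq_empty_or_nonempty with hE | ⟨Z, hZ⟩
  · have key : ∀ D, (∀ i, trL (A i) D = 0) → trL C D = 0 := by
      intro D hD
      by_contra hne
      have : X - (trL C D) • D ∈ V := by
        refine ⟨fun i => ?_, ?_⟩
        · rw [map_sub, map_smul, hD i, hbX i]; simp
        · rw [map_sub, map_smul, smul_eq_mul]
          have := mul_self_pos.2 hne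
          linarith
      rw [hE] at this
      exact this
    obtain ⟨y, hy⟩ := exists_lin A (trL C) key
    have hz : ∀ Y, trL (C - ∑ i, y i • A i) Y = 0 := by
      intro Y
      rw [trL_sum, hy]
      simp
    refine ⟨y, ?_, (hz X).le⟩
    refine PosSemidef.of_dotProduct_mulVec_nonneg ?_ ?_
    · have := sub_isSymm hA y hC
      simpa [IsHermitian, IsSymm] using this
    · intro x
      rw [star_trivial, ← trL_vec, hz]
  · have hVc : Convex ℝ V := by
      intro P hP Q hQ s t hs ht hst
      refine ⟨fun i => ?_, ?_⟩
      · rw [map_add, map_smul, map_smul, hP.1 i, hQ.1 i, smul_eq_mul, smul_eq_mul, ← add_mul, hst,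
          one_mul]
      · rw [map_add, map_smul, map_smul, smul_eq_mul, smul_eq_mul]
        have h1 := hP.2
        have h2 := hQ.2
        rcases hs.eq_or_lt with rfl | hs'
        · have : t = 1 := by linarith
          subst this
          linarith
        · have e1 := mul_lt_mul_of_pos_left h1 hs'
          have e2 := mul_le_mul_of_nonneg_left h2.le ht
          have e3 : s * trL C X + t * trL C X = trL C X := by rw [← add_mul, hst, one_mul]
          linarith
    have hdisj : Disjoint {M : Matrix (Fin n) (Fin n) ℝ | QPos M} V := by
      rw [Set.disjoint_left]
      intro M hM hMV
      have hsym : ∀ {B : Matrix (Fin n) (Fin n) ℝ}, B.IsSymm →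
          trL B ((1 / 2 : ℝ) • (M + Mᵀ)) = trL B M := by
        intro B hB
        rw [map_smul, map_add, trL_one_sym hB, smul_eq_mul]
        ring
      have hpd := QPos.symPart hM
      have := hopt ((1 / 2 : ℝ) • (M + Mᵀ)) ⟨by simp [IsSymm, add_comm], fun i => by
        have := hsym (hA i)
        rw [hMV.1 i] at this
        exact this, hpd.posSemidef⟩
      rw [hsym hC] at this
      exact absurd hMV.2 (not_lt.2 this)
    obtain ⟨f, u, hfU, hfV⟩ := geometric_hahn_banach_open (convex_QPos n) (isOpen_QPos n) hVc hdisj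
    have hfQ : ∀ M, QPos M → f M ≤ 0 := by
      intro M hM
      by_contra hlt
      push Not at hlt
      have h1 := hfU ((|u| / f M + 1) • M) (hM.smul (by positivity))
      rw [map_smul, smul_eq_mul, add_mul, div_mul_cancel₀ _ hlt.ne'] at h1
      have := le_abs_self u
      linarith
    have h1Q : QPos (1 : Matrix (Fin n) (Fin n) ℝ) := QPos.of_posDef PosDef.one
    have hu : 0 ≤ u := by
      by_contra hlt
      push Not at hlt
      have h0 := hfQ 1 h1Q
      have hc : 0 < -u / (1 - f 1) := div_pos (by linarith) (by linarith)
      have h1 := hfU ((-u / (1 - f 1)) • 1) (h1Q.smul hc)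
      rw [map_smul, smul_eq_mul, div_mul_eq_mul_div, div_lt_iff₀ (by linarith)] at h1
      nlinarith
    have hfv : ∀ x, f (vecMulVec x x) ≤ 0 := by
      intro x
      by_contra hlt
      push Not at hlt
      have h0 := hfQ 1 h1Q
      have hc : 0 < f (vecMulVec x x) / (1 - f 1) := div_pos hlt (by linarith)
      have h1 := hfQ (vecMulVec x x + (f (vecMulVec x x) / (1 - f 1)) • 1) (by
        intro z hz
        rw [add_mulVec, dotProduct_add]
        have e1 := (h1Q.smul hc) z hz
        have e2 : 0 ≤ z ⬝ᵥ vecMulVec x x *ᵥ z := by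
          have := (posSemidef_vecMulVec_self_star x).dotProduct_mulVec_nonneg z
          simpa using this
        linarith)
      rw [map_add, map_smul, smul_eq_mul, div_mul_eq_mul_div] at h1
      have : -(f (vecMulVec x x) * f 1 / (1 - f 1)) < f (vecMulVec x x) := by
        rw [← neg_div, div_lt_iff₀ (by linarith)]
        nlinarith
      linarith
    have hker : ∀ D, (∀ i, trL (A i) D = 0) → trL C D = 0 → f D = 0 := by
      intro D hD hCD
      by_contra hne
      have hmem : Z - ((f Z - u + 1) / f D) • D ∈ V := by
        refine ⟨fun i => ?_, ?_⟩
        · rw [map_sub, map_smul, hD i, hZ.1 i]; simp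
        · rw [map_sub, map_smul, hCD]; simpa using hZ.2
      have := hfV _ hmem
      rw [map_sub, map_smul, smul_eq_mul, div_mul_cancel₀ _ hne] at this
      linarith
    obtain ⟨l, y, hly⟩ := exists_lin' A C (f : Matrix (Fin n) (Fin n) ℝ →ₗ[ℝ] ℝ) hker
    have hf : ∀ M, f M = l * trL C M + ∑ i, y i * trL (A i) M := by
      intro M
      have := congrArg (fun g => g M) hly
      simpa using this
    have hl : l < 0 := by
      have h1 := hfU X0 (QPos.of_posDef hX0p)
      have h2 := hfV Z hZ
      have h3 : f X0 - f Z = l * (trL C X0 - trL C Z) := by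
        rw [hf, hf]
        simp only [show ∀ i, trL (A i) X0 = b i from hX0.2.1, hZ.1]
        ring
      have h4 := hopt X0 hX0
      have h5 := hZ.2
      by_contra hl
      push Not at hl
      have := mul_nonneg hl (show 0 ≤ trL C X0 - trL C Z by linarith)
      linarith
    have hS : ∀ M, trL (C - ∑ i, (-(y i / l)) • A i) M = f M / l := by
      intro M
      rw [trL_sum, hf, add_div, mul_div_cancel_left₀ _ hl.ne, Finset.sum_div, sub_eq_add_neg,
        ← Finset.sum_neg_distrib]
      congr 1
      refine Finset.sum_congr rfl fun i _ => ?_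
      ring
    refine ⟨fun i => -(y i / l), ?_, ?_⟩
    · refine PosSemidef.of_dotProduct_mulVec_nonneg ?_ ?_
      · have := sub_isSymm hA (fun i => -(y i / l)) hC
        simpa [IsHermitian, IsSymm] using this
      · intro x
        rw [star_trivial, ← trL_vec, hS]
        exact div_nonneg_of_nonpos (hfv x) hl.le
    · rw [hS]
      suffices h : 0 ≤ f X from div_nonpos_of_nonneg_of_nonpos h hl.le
      by_contra hlt
      push Not at hlt
      have hfZ := hfV Z hZ
      -- move slightly from `X` towards `Z`
      set t : ℝ := -f X / (2 * (f Z - f X)) with ht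
      have hd : 0 < f Z - f X := by linarith
      have ht0 : 0 < t := div_pos (by linarith) (by linarith)
      have htd : t * (f Z - f X) = -f X / 2 := by
        rw [ht]; field_simp
      have hmem : X + t • (Z - X) ∈ V := by
        refine ⟨fun i => ?_, ?_⟩
        · rw [map_add, map_smul, map_sub, hZ.1 i, hbX i]; simp
        · rw [map_add, map_smul, map_sub, smul_eq_mul]
          have := mul_neg_of_pos_of_neg ht0 (show trL C Z - trL C X < 0 by linarith [hZ.2])
          linarith
      have := hfV _ hmem
      rw [map_add, map_smul, map_sub, smul_eq_mul, htd] at this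
      linarith

lemma relint_extend {E : Type*} [AddCommGroup E] [Module ℝ E] [TopologicalSpace E]
    [ContinuousAdd E] [ContinuousSMul ℝ E] {P : Set E} {X Y : E}
    (hX : X ∈ intrinsicInterior ℝ P) (hY : Y ∈ P) : ∃ t : ℝ, 0 < t ∧ X + t • (X - Y) ∈ P := by
  obtain ⟨x, hx, rfl⟩ := mem_intrinsicInterior.1 hX
  have hmem : ∀ t : ℝ, (x : E) + t • ((x : E) - Y) ∈ affineSpan ℝ P := by
    intro t
    have := AffineSubspace.smul_vsub_vadd_mem (affineSpan ℝ P) t x.2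
      (subset_affineSpan ℝ P hY) x.2
    rwa [vsub_eq_sub, vadd_eq_add, add_comm] at this
  let φ : ℝ → affineSpan ℝ P := fun t => ⟨(x : E) + t • ((x : E) - Y), hmem t⟩
  have hφ : Continuous φ := by
    apply Continuous.subtype_mk
    fun_prop
  have h0 : φ 0 = x := by
    apply Subtype.ext
    simp [φ]
  have hev : ∀ᶠ t in nhds (0 : ℝ), φ t ∈ interior ((↑) ⁻¹' P : Set (affineSpan ℝ P)) := by
    apply hφ.continuousAt.eventually
    rw [h0]
    exact isOpen_interior.mem_nhds hx
  obtain ⟨t, ht, htm⟩ := ((hev.filter_mono nhdsWithin_le_nhds).and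
    (self_mem_nhdsWithin (s := Set.Ioi (0 : ℝ)))).exists
  have hP : φ t ∈ ((↑) ⁻¹' P : Set (affineSpan ℝ P)) := interior_subset ht
  exact ⟨t, htm, hP⟩

lemma relint_of {E : Type*} [AddCommGroup E] [Module ℝ E] [TopologicalSpace E]
    {P O : Set E} {X : E} (hX : X ∈ P) (hO : IsOpen O) (hXO : X ∈ O)
    (h : ∀ Z ∈ O, Z ∈ affineSpan ℝ P → Z ∈ P) : X ∈ intrinsicInterior ℝ P := by
  refine mem_intrinsicInterior.2 ⟨⟨X, subset_affineSpan ℝ P hX⟩, ?_, rfl⟩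
  rw [mem_interior]
  exact ⟨(Subtype.val ⁻¹' O : Set (affineSpan ℝ P)), fun z hz => h _ hz z.2, hO.preimage continuous_subtype_val, hXO⟩

lemma range_factor {n k l : ℕ} {Q : Matrix (Fin n) (Fin k) ℝ} {X : Matrix (Fin n) (Fin l) ℝ}
    (h : LinearMap.range Q.mulVecLin ≤ LinearMap.range X.mulVecLin) :
    ∃ W : Matrix (Fin l) (Fin k) ℝ, Q = X * W := by
  have h1 : ∀ j : Fin k, ∃ w, X *ᵥ w = Q *ᵥ Pi.single j 1 := by
    intro j
    have : Q.mulVecLin (Pi.single j 1) ∈ LinearMap.range X.mulVecLin := h ⟨_, rfl⟩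
    obtain ⟨w, hw⟩ := this
    exact ⟨w, by simpa using hw⟩
  choose w hw using h1
  refine ⟨Matrix.of fun i j => w j i, ?_⟩
  apply Matrix.ext_of_mulVec_single
  intro j
  rw [← hw j, ← mulVec_mulVec]
  congr 1
  ext i
  simp

lemma range_le_of_factor {n k l : ℕ} {Q : Matrix (Fin n) (Fin k) ℝ} {X : Matrix (Fin n) (Fin l) ℝ}
    {W : Matrix (Fin l) (Fin k) ℝ} (h : Q = X * W) :
    LinearMap.range Q.mulVecLin ≤ LinearMap.range X.mulVecLin := by
  rintro _ ⟨v, rfl⟩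
  exact ⟨W *ᵥ v, by simp [h]⟩

lemma ker_of_range {n : ℕ} {X X' : Matrix (Fin n) (Fin n) ℝ} (hX : X.IsSymm) (hX' : X'.IsSymm)
    (h : LinearMap.range X.mulVecLin ≤ LinearMap.range X'.mulVecLin) {v : Fin n → ℝ}
    (hv : X' *ᵥ v = 0) : X *ᵥ v = 0 := by
  obtain ⟨W, hW⟩ := range_factor h
  have : X = Wᵀ * X' := by
    rw [← hX.eq, hW, transpose_mul, hX'.eq]
  rw [this, ← mulVec_mulVec, hv, mulVec_zero]

lemma proj_of_ker {n k : ℕ} {X Xb : Matrix (Fin n) (Fin n) ℝ} {Q : Matrix (Fin n) (Fin k) ℝ}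
    (hXb : Xb.IsSymm) (hQ : Qᵀ * Q = 1)
    (hr : LinearMap.range Q.mulVecLin = LinearMap.range Xb.mulVecLin)
    (hk : ∀ v, Xb *ᵥ v = 0 → X *ᵥ v = 0) : X * (Q * Qᵀ) = X := by
  obtain ⟨W, hW⟩ := range_factor hr.ge
  have h1 : (Q * Qᵀ) * Xb = Xb := by
    rw [hW, ← Matrix.mul_assoc, Matrix.mul_assoc Q, hQ, Matrix.mul_one]
  have h2 : Xb * (Q * Qᵀ) = Xb := by
    have := congrArg transpose h1
    rwa [transpose_mul, transpose_mul, transpose_transpose, hXb.eq] at this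
  apply Matrix.ext_of_mulVec_single
  intro j
  have := hk ((Q * Qᵀ - 1) *ᵥ Pi.single j 1) (by
    rw [mulVec_mulVec, Matrix.mul_sub, h2, Matrix.mul_one, sub_self, zero_mulVec])
  rw [mulVec_mulVec, Matrix.mul_sub, Matrix.mul_one, sub_mulVec] at this
  exact sub_eq_zero.1 this

lemma proj_both {n k : ℕ} {X : Matrix (Fin n) (Fin n) ℝ} {Q : Matrix (Fin n) (Fin k) ℝ}
    (hX : X.IsSymm) (h : X * (Q * Qᵀ) = X) : X = Q * (Qᵀ * X * Q) * Qᵀ := by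
  have h2 : (Q * Qᵀ) * X = X := by
    have := congrArg transpose h
    rwa [transpose_mul, transpose_mul, transpose_transpose, hX.eq] at this
  calc X = (Q * Qᵀ) * X * (Q * Qᵀ) := by rw [h2, h]
    _ = _ := by simp only [Matrix.mul_assoc]

lemma core {n k : ℕ} {X Xb : Matrix (Fin n) (Fin n) ℝ} {Q : Matrix (Fin n) (Fin k) ℝ}
    (hXs : X.IsSymm) (hX : X.PosSemidef) (hXb : Xb.IsSymm) (hQ : Qᵀ * Q = 1)
    (hr : LinearMap.range Q.mulVecLin = LinearMap.range Xb.mulVecLin)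
    (hk : ∀ v, X *ᵥ v = 0 ↔ Xb *ᵥ v = 0) :
    X = Q * (Qᵀ * X * Q) * Qᵀ ∧ (Qᵀ * X * Q).PosDef := by
  refine ⟨proj_both hXs (proj_of_ker hXb hQ hr fun v => (hk v).2), ?_⟩
  obtain ⟨W, hW⟩ := range_factor hr.le
  have hpsd : (Qᵀ * X * Q).PosSemidef := by
    simpa using hX.conjTranspose_mul_mul_same Q
  refine PosDef.of_dotProduct_mulVec_pos hpsd.isHermitian ?_
  intro x hx
  refine lt_of_le_of_ne (hpsd.dotProduct_mulVec_nonneg x) ?_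
  intro h0
  apply hx
  have h1 : (Q *ᵥ x) ⬝ᵥ X *ᵥ (Q *ᵥ x) = 0 := by
    rw [star_trivial] at h0
    rw [h0, ← mulVec_mulVec, ← mulVec_mulVec, dotProduct_mulVec x, vecMul_transpose]
  have h2 := (hk _).1 (psd_ker hX h1)
  have h3 : Wᵀ * Xb = Qᵀ := by
    rw [hW, transpose_mul, hXb.eq]
  calc x = (Qᵀ * Q) *ᵥ x := by rw [hQ, one_mulVec]
    _ = Wᵀ *ᵥ (Xb *ᵥ (Q *ᵥ x)) := by rw [mulVec_mulVec, h3, mulVec_mulVec]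
    _ = 0 := by rw [h2, mulVec_zero]

lemma conj_psd {n k : ℕ} (Q : Matrix (Fin n) (Fin k) ℝ) {U : Matrix (Fin k) (Fin k) ℝ}
    (hU : U.PosSemidef) : (Q * U * Qᵀ).PosSemidef := by
  simpa using hU.mul_mul_conjTranspose_same Q

lemma psd_symm {n : ℕ} {X : Matrix (Fin n) (Fin n) ℝ} (hX : X.PosSemidef) : X.IsSymm := by
  have := hX.isHermitian
  simpa [IsHermitian, IsSymm] using this

lemma factor_conj {n k : ℕ} {Q : Matrix (Fin n) (Fin k) ℝ} (hQ : Qᵀ * Q = 1)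
    {U : Matrix (Fin k) (Fin k) ℝ} (hU : U.PosDef) : Q = (Q * U * Qᵀ) * (Q * U⁻¹) := by
  have hdet : IsUnit U.det := (Matrix.isUnit_iff_isUnit_det U).1 hU.isUnit
  calc Q = Q * (U * U⁻¹) := by rw [Matrix.mul_nonsing_inv _ hdet, Matrix.mul_one]
    _ = Q * U * (Qᵀ * Q) * U⁻¹ := by rw [hQ, Matrix.mul_one, Matrix.mul_assoc]
    _ = _ := by simp only [Matrix.mul_assoc]

lemma range_conj {n k : ℕ} {Q : Matrix (Fin n) (Fin k) ℝ} (hQ : Qᵀ * Q = 1)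
    {U : Matrix (Fin k) (Fin k) ℝ} (hU : U.PosDef) :
    LinearMap.range (Q * U * Qᵀ).mulVecLin = LinearMap.range Q.mulVecLin :=
  le_antisymm (range_le_of_factor (W := U * Qᵀ) (Matrix.mul_assoc _ _ _))
    (range_le_of_factor (factor_conj hQ hU))

lemma relint_ker_primal {n m : ℕ} {C Cbar : Matrix (Fin n) (Fin n) ℝ}
    {A : Fin m → Matrix (Fin n) (Fin n) ℝ} {b : Fin m → ℝ} {ε : ℝ} {X Y : Matrix (Fin n) (Fin n) ℝ}
    (hX : X ∈ intrinsicInterior ℝ (PrimalOpt C Cbar A b ε)) (hY : Y ∈ PrimalOpt C Cbar A b ε)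
    {v : Fin n → ℝ} (hv : X *ᵥ v = 0) : Y *ᵥ v = 0 := by
  obtain ⟨t, ht, hm⟩ := relint_extend hX hY
  have h1 := hm.1.2.2.dotProduct_mulVec_nonneg v
  have h2 := hY.1.2.2.dotProduct_mulVec_nonneg v
  rw [star_trivial] at h1 h2
  rw [add_mulVec, smul_mulVec, sub_mulVec, hv, zero_add, zero_sub, dotProduct_smul, dotProduct_neg,
    smul_eq_mul] at h1
  exact psd_ker hY.1.2.2 (by nlinarith)

lemma relint_ker_dual {n m : ℕ} {C Cbar : Matrix (Fin n) (Fin n) ℝ}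
    {A : Fin m → Matrix (Fin n) (Fin n) ℝ} {b : Fin m → ℝ} {ε : ℝ} {X Y : Matrix (Fin n) (Fin n) ℝ}
    {y z : Fin m → ℝ}
    (hX : (y, X) ∈ intrinsicInterior ℝ (DualOpt C Cbar A b ε)) (hY : (z, Y) ∈ DualOpt C Cbar A b ε)
    {v : Fin n → ℝ} (hv : X *ᵥ v = 0) : Y *ᵥ v = 0 := by
  obtain ⟨t, ht, hm⟩ := relint_extend hX hY
  have h1 := hm.1.2.2.dotProduct_mulVec_nonneg v
  have hYp : Y.PosSemidef := hY.1.2.2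
  have h2 := hYp.dotProduct_mulVec_nonneg v
  rw [star_trivial] at h1 h2
  simp only [Prod.snd_add, Prod.smul_snd, Prod.snd_sub] at h1
  rw [add_mulVec, smul_mulVec, sub_mulVec, hv, zero_add, zero_sub, dotProduct_smul, dotProduct_neg,
    smul_eq_mul] at h1
  exact psd_ker hYp (by nlinarith)

lemma duality_id {n m : ℕ} {A : Fin m → Matrix (Fin n) (Fin n) ℝ} {b : Fin m → ℝ}
    {C X S : Matrix (Fin n) (Fin n) ℝ} {y : Fin m → ℝ} (hX : ∀ i, (A i * X).trace = b i)
    (hS : (∑ i, y i • A i) + S = C) : (C * X).trace = ∑ i, b i * y i + (S * X).trace := by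
  rw [← hS, Matrix.add_mul, trace_add, Matrix.sum_mul, trace_sum]
  congr 1
  refine Finset.sum_congr rfl fun i _ => ?_
  rw [Matrix.smul_mul, trace_smul, hX i, smul_eq_mul, mul_comm]

lemma opt_of_comp {n m : ℕ} {C Cbar : Matrix (Fin n) (Fin n) ℝ}
    {A : Fin m → Matrix (Fin n) (Fin n) ℝ} {b : Fin m → ℝ} {ε : ℝ} {X S : Matrix (Fin n) (Fin n) ℝ}
    {y : Fin m → ℝ} (hX : PrimalFeasible A b X) (hS : DualFeasible C Cbar A ε y S)
    (h : S * X = 0) : X ∈ PrimalOpt C Cbar A b ε ∧ (y, S) ∈ DualOpt C Cbar A b ε := by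
  have h0 := duality_id hX.2.1 hS.2.1
  rw [h, trace_zero, add_zero] at h0
  refine ⟨⟨hX, fun X' hX' => ?_⟩, ⟨hS, fun y' S' hS' => ?_⟩⟩
  · have h1 := duality_id hX'.2.1 hS.2.1
    have h2 := psd_trace_nonneg hS.2.2 hX'.2.2
    linarith
  · have h1 := duality_id hX.2.1 hS'.2.1
    have h2 := psd_trace_nonneg hS'.2.2 hX.2.2
    show _ ≤ ∑ i, b i * y i
    linarith

lemma comp_of_opt {n m : ℕ} {C Cbar : Matrix (Fin n) (Fin n) ℝ}
    {A : Fin m → Matrix (Fin n) (Fin n) ℝ} {b : Fin m → ℝ} (hSA : StandingAssumptions C Cbar A b)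
    {ε : ℝ} {X S : Matrix (Fin n) (Fin n) ℝ}
    {y : Fin m → ℝ} (hX : X ∈ PrimalOpt C Cbar A b ε) (hS : (y, S) ∈ DualOpt C Cbar A b ε) :
    S * X = 0 := by
  obtain ⟨hC, hCb, hA, -, X0, y0, S0, hX0, hX0p, -, -⟩ := hSA
  have hCs : (C + ε • Cbar).IsSymm := by
    simp [IsSymm, hC.eq, hCb.eq]
  obtain ⟨z, hz, hzX⟩ := strong_duality hCs hA hX0 hX0p hX.1 hX.2
  have hSf : DualFeasible C Cbar A ε y S := hS.1
  have hzf : DualFeasible C Cbar A ε z (C + ε • Cbar - ∑ i, z i • A i) :=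
    ⟨psd_symm hz, by abel, hz⟩
  have h1 := duality_id hX.1.2.1 hSf.2.1
  have h2 := duality_id hX.1.2.1 hzf.2.1
  have h3 : ∑ i, b i * z i ≤ ∑ i, b i * y i := hS.2 _ _ hzf
  have h4 := psd_trace_nonneg hSf.2.2 hX.1.2.2
  rw [trL_apply] at hzX
  exact psd_mul_zero hSf.2.2 hX.1.2.2 (by linarith)

lemma relint_primal {n m k : ℕ} {C Cbar : Matrix (Fin n) (Fin n) ℝ}
    {A : Fin m → Matrix (Fin n) (Fin n) ℝ} {b : Fin m → ℝ} {ε : ℝ}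
    {Q : Matrix (Fin n) (Fin k) ℝ} {U : Matrix (Fin k) (Fin k) ℝ} (hQ : Qᵀ * Q = 1)
    (hU : U.PosDef) (hX : Q * U * Qᵀ ∈ PrimalOpt C Cbar A b ε)
    (h : ∀ Y ∈ PrimalOpt C Cbar A b ε, Y * (Q * Qᵀ) = Y) :
    Q * U * Qᵀ ∈ intrinsicInterior ℝ (PrimalOpt C Cbar A b ε) := by
  have hcont : Continuous fun Z : Matrix (Fin n) (Fin n) ℝ => Qᵀ * Z * Q := by fun_prop
  refine relint_of hX ((isOpen_QPos k).preimage hcont) ?_ ?_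
  · show QPos (Qᵀ * (Q * U * Qᵀ) * Q)
    have : Qᵀ * (Q * U * Qᵀ) * Q = (Qᵀ * Q) * U * (Qᵀ * Q) := by simp only [Matrix.mul_assoc]
    rw [this, hQ, Matrix.one_mul, Matrix.mul_one]
    exact QPos.of_posDef hU
  · intro Z hZ hspan
    have hp : Zᵀ = Z ∧ (∀ i, trL (A i) Z = b i) ∧ Z * (Q * Qᵀ) = Z ∧
        trL (C + ε • Cbar) Z = trL (C + ε • Cbar) (Q * U * Qᵀ) := by
      refine affineSpan_induction (p := fun Z => Zᵀ = Z ∧ (∀ i, trL (A i) Z = b i) ∧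
        Z * (Q * Qᵀ) = Z ∧ trL (C + ε • Cbar) Z = trL (C + ε • Cbar) (Q * U * Qᵀ)) hspan ?_ ?_
      · intro Y hY
        exact ⟨hY.1.1, hY.1.2.1, h Y hY, le_antisymm (hY.2 _ hX.1) (hX.2 _ hY.1)⟩
      · rintro c u v w ⟨u1, u2, u3, u4⟩ ⟨v1, v2, v3, v4⟩ ⟨w1, w2, w3, w4⟩
        simp only [vsub_eq_sub, vadd_eq_add]
        refine ⟨?_, fun i => ?_, ?_, ?_⟩
        · rw [transpose_add, transpose_smul, transpose_sub, u1, v1, w1]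
        · rw [map_add, map_smul, map_sub, u2, v2, w2]; simp
        · rw [Matrix.add_mul, Matrix.smul_mul, Matrix.sub_mul, u3, v3, w3]
        · rw [map_add, map_smul, map_sub, u4, v4, w4]; simp
    obtain ⟨p1, p2, p3, p4⟩ := hp
    have hZs : Z.IsSymm := p1
    have hpd : (Qᵀ * Z * Q).PosDef := QPos.posDef hZ (by
      unfold IsSymm
      rw [transpose_mul, transpose_mul, transpose_transpose, p1, Matrix.mul_assoc])
    refine ⟨⟨p1, p2, ?_⟩, fun X' hX' => ?_⟩
    · rw [proj_both hZs p3]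
      exact conj_psd Q hpd.posSemidef
    · have := hX.2 X' hX'
      rw [trL_apply, trL_apply] at p4
      rw [p4]
      exact this

lemma relint_dual {n m k : ℕ} {C Cbar : Matrix (Fin n) (Fin n) ℝ}
    {A : Fin m → Matrix (Fin n) (Fin n) ℝ} {b : Fin m → ℝ} {ε : ℝ} {y : Fin m → ℝ}
    {Q : Matrix (Fin n) (Fin k) ℝ} {U : Matrix (Fin k) (Fin k) ℝ} (hQ : Qᵀ * Q = 1)
    (hU : U.PosDef) (hX : (y, Q * U * Qᵀ) ∈ DualOpt C Cbar A b ε)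
    (h : ∀ p ∈ DualOpt C Cbar A b ε, p.2 * (Q * Qᵀ) = p.2) :
    (y, Q * U * Qᵀ) ∈ intrinsicInterior ℝ (DualOpt C Cbar A b ε) := by
  have hcont : Continuous fun Z : (Fin m → ℝ) × Matrix (Fin n) (Fin n) ℝ => Qᵀ * Z.2 * Q := by
    fun_prop
  refine relint_of hX ((isOpen_QPos k).preimage hcont) ?_ ?_
  · show QPos (Qᵀ * (Q * U * Qᵀ) * Q)
    have : Qᵀ * (Q * U * Qᵀ) * Q = (Qᵀ * Q) * U * (Qᵀ * Q) := by simp only [Matrix.mul_assoc]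
    rw [this, hQ, Matrix.one_mul, Matrix.mul_one]
    exact QPos.of_posDef hU
  · intro Z hZ hspan
    have hp : Z.2ᵀ = Z.2 ∧ (∑ i, Z.1 i • A i) + Z.2 = C + ε • Cbar ∧ Z.2 * (Q * Qᵀ) = Z.2 ∧
        ∑ i, b i * Z.1 i = ∑ i, b i * y i := by
      refine affineSpan_induction (p := fun Z : (Fin m → ℝ) × Matrix (Fin n) (Fin n) ℝ =>
        Z.2ᵀ = Z.2 ∧ (∑ i, Z.1 i • A i) + Z.2 = C + ε • Cbar ∧ Z.2 * (Q * Qᵀ) = Z.2 ∧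
        ∑ i, b i * Z.1 i = ∑ i, b i * y i) hspan ?_ ?_
      · intro Y hY
        exact ⟨hY.1.1, hY.1.2.1, h Y hY, le_antisymm (hX.2 _ _ hY.1) (hY.2 _ _ hX.1)⟩
      · rintro c u v w ⟨u1, u2, u3, u4⟩ ⟨v1, v2, v3, v4⟩ ⟨w1, w2, w3, w4⟩
        simp only [vsub_eq_sub, vadd_eq_add, Prod.snd_add, Prod.smul_snd, Prod.snd_sub,
          Prod.fst_add, Prod.smul_fst, Prod.fst_sub, Pi.add_apply, Pi.smul_apply, Pi.sub_apply,
          smul_eq_mul]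
        refine ⟨?_, ?_, ?_, ?_⟩
        · rw [transpose_add, transpose_smul, transpose_sub, u1, v1, w1]
        · have e : ∑ i, (c * (u.1 i - v.1 i) + w.1 i) • A i =
              c • ((∑ i, u.1 i • A i) - ∑ i, v.1 i • A i) + ∑ i, w.1 i • A i := by
            rw [← Finset.sum_sub_distrib, Finset.smul_sum, ← Finset.sum_add_distrib]
            refine Finset.sum_congr rfl fun i _ => ?_
            module
          rw [e]
          have e2 : c • ((∑ i, u.1 i • A i) - ∑ i, v.1 i • A i) + (∑ i, w.1 i • A i) +
              (c • (u.2 - v.2) + w.2) = c • (((∑ i, u.1 i • A i) + u.2) -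
                ((∑ i, v.1 i • A i) + v.2)) + ((∑ i, w.1 i • A i) + w.2) := by module
          rw [e2, u2, v2, w2, sub_self, smul_zero, zero_add]
        · rw [Matrix.add_mul, Matrix.smul_mul, Matrix.sub_mul, u3, v3, w3]
        · have e : ∑ i, b i * (c * (u.1 i - v.1 i) + w.1 i) =
              c * ((∑ i, b i * u.1 i) - ∑ i, b i * v.1 i) + ∑ i, b i * w.1 i := by
            rw [← Finset.sum_sub_distrib, Finset.mul_sum, ← Finset.sum_add_distrib]
            refine Finset.sum_congr rfl fun i _ => ?_
            ring
          rw [e, u4, v4, w4]; ring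
    obtain ⟨p1, p2, p3, p4⟩ := hp
    have hZs : Z.2.IsSymm := p1
    have hpd : (Qᵀ * Z.2 * Q).PosDef := QPos.posDef hZ (by
      unfold IsSymm
      rw [transpose_mul, transpose_mul, transpose_transpose, p1, Matrix.mul_assoc])
    refine ⟨⟨p1, p2, ?_⟩, fun y' S' hS' => ?_⟩
    · rw [proj_both hZs p3]
      exact conj_psd Q hpd.posSemidef
    · rw [p4]
      exact hX.2 y' S' hS'

lemma exists_sub_posDef {k : ℕ} {V U : Matrix (Fin k) (Fin k) ℝ} (hV : V.PosDef) (hU : U.PosDef) :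
    ∃ t : ℝ, 0 < t ∧ (V - t • U).PosDef := by
  have hc : Continuous fun t : ℝ => V - t • U := by fun_prop
  have hev : ∀ᶠ t in nhds (0 : ℝ), V - t • U ∈ {M : Matrix (Fin k) (Fin k) ℝ | QPos M} := by
    apply hc.continuousAt.eventually
    apply (isOpen_QPos k).mem_nhds
    simpa using QPos.of_posDef hV
  obtain ⟨t, ht, htm⟩ := ((hev.filter_mono nhdsWithin_le_nhds).and
    (self_mem_nhdsWithin (s := Set.Ioi (0 : ℝ)))).exists
  refine ⟨t, htm, QPos.posDef ht ?_⟩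
  simp [IsSymm, (psd_symm hV.posSemidef).eq, (psd_symm hU.posSemidef).eq]

/-- characterization of the invariancy set of `ε̄` via the auxiliary system. -/
theorem stmt3 {n m : ℕ} (C Cbar : Matrix (Fin n) (Fin n) ℝ)
    (A : Fin m → Matrix (Fin n) (Fin n) ℝ) (b : Fin m → ℝ)
    (hSA : StandingAssumptions C Cbar A b)
    (εbar : ℝ) (hεbar : εbar ∈ interior (Eset C Cbar A b))
    (Xb Sb : Matrix (Fin n) (Fin n) ℝ) (yb : Fin m → ℝ)
    (hmc : MaxComp C Cbar A b εbar Xb yb Sb)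
    (kB kN : ℕ) (QB : Matrix (Fin n) (Fin kB) ℝ) (QN : Matrix (Fin n) (Fin kN) ℝ)
    (hQBorth : QBᵀ * QB = 1)
    (hQBrange : LinearMap.range QB.mulVecLin = LinearMap.range Xb.mulVecLin)
    (hQNorth : QNᵀ * QN = 1)
    (hQNrange : LinearMap.range QN.mulVecLin = LinearMap.range Sb.mulVecLin)
    (ε : ℝ) (hε : ε ∈ interior (Eset C Cbar A b)) :
    SamePartition C Cbar A b ε εbar ↔
      ∃ (UX : Matrix (Fin kB) (Fin kB) ℝ) (y : Fin m → ℝ) (US : Matrix (Fin kN) (Fin kN) ℝ),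
        UX.PosDef ∧ US.PosDef ∧
        (∀ i, ((A i) * (QB * UX * QBᵀ)).trace = b i) ∧
        (∑ i, y i • A i) + QN * US * QNᵀ = C + ε • Cbar := by
  have hXbo := intrinsicInterior_subset hmc.1
  have hSbo := intrinsicInterior_subset hmc.2
  have hSbf : DualFeasible C Cbar A εbar yb Sb := hSbo.1
  have hXbs : Xb.IsSymm := hXbo.1.1
  have hSbs : Sb.IsSymm := hSbf.1
  constructor
  · rintro ⟨X, y, S, X', y', S', hm, hm', hXr, hSr⟩
    have hXo := intrinsicInterior_subset hm.1
    have hSo := intrinsicInterior_subset hm.2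
    have hSf : DualFeasible C Cbar A ε y S := hSo.1
    have hXo' := intrinsicInterior_subset hm'.1
    have hSo' := intrinsicInterior_subset hm'.2
    have hSs' : S'.IsSymm := hSo'.1.1
    obtain ⟨hX1, hX2⟩ := core hXo.1.1 hXo.1.2.2 hXbs hQBorth hQBrange (fun v =>
      ⟨fun hv => relint_ker_primal hm'.1 hXbo (ker_of_range hXo'.1.1 hXo.1.1 hXr.ge hv),
        fun hv => ker_of_range hXo.1.1 hXo'.1.1 hXr.le (relint_ker_primal hmc.1 hXo' hv)⟩)
    obtain ⟨hS1, hS2⟩ := core hSf.1 hSf.2.2 hSbs hQNorth hQNrange (fun v =>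
      ⟨fun hv => relint_ker_dual hm'.2 hSbo (ker_of_range hSs' hSf.1 hSr.ge hv),
        fun hv => ker_of_range hSf.1 hSs' hSr.le (relint_ker_dual hmc.2 hSo' hv)⟩)
    refine ⟨QBᵀ * X * QB, y, QNᵀ * S * QN, hX2, hS2, ?_, ?_⟩
    · rw [← hX1]
      exact hXo.1.2.1
    · rw [← hS1]
      exact hSf.2.1
  · rintro ⟨UX, y, US, hUX, hUS, hAX, hyS⟩
    have hcb : Sb * Xb = 0 := comp_of_opt hSA hXbo hSbo
    obtain ⟨W1, hW1⟩ := range_factor hQBrange.le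
    obtain ⟨W2, hW2⟩ := range_factor hQNrange.le
    obtain ⟨W1', hW1'⟩ := range_factor hQBrange.ge
    obtain ⟨W2', hW2'⟩ := range_factor hQNrange.ge
    have hSbT : Sb = W2'ᵀ * QNᵀ := by
      rw [← transpose_mul, ← hW2', hSbs.eq]
    have hQNT : QNᵀ = W2ᵀ * Sb := by
      rw [hW2, transpose_mul, hSbs.eq]
    have hQNX : QNᵀ * Xb = 0 := by
      rw [hQNT, Matrix.mul_assoc, hcb, Matrix.mul_zero]
    have hNB : QNᵀ * QB = 0 := by
      rw [hW1, ← Matrix.mul_assoc, hQNX, Matrix.zero_mul]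
    have hXp := conj_psd QB hUX.posSemidef
    have hSp := conj_psd QN hUS.posSemidef
    have hXf : PrimalFeasible A b (QB * UX * QBᵀ) := ⟨psd_symm hXp, hAX, hXp⟩
    have hSf : DualFeasible C Cbar A ε y (QN * US * QNᵀ) := ⟨psd_symm hSp, hyS, hSp⟩
    have hSX : (QN * US * QNᵀ) * (QB * UX * QBᵀ) = 0 := by
      have : (QN * US * QNᵀ) * (QB * UX * QBᵀ) = QN * US * (QNᵀ * QB) * UX * QBᵀ := by
        simp only [Matrix.mul_assoc]
      rw [this, hNB]
      simp
    obtain ⟨hXo, hSo⟩ := opt_of_comp hXf hSf hSX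
    have hPP : ∀ Y ∈ PrimalOpt C Cbar A b ε, Y * (QB * QBᵀ) = Y := by
      intro Y hY
      have h1 := comp_of_opt hSA hY hSo
      have h2 : QNᵀ * Y = 0 := by
        rw [factor_conj hQNorth hUS, transpose_mul, (psd_symm hSp).eq, Matrix.mul_assoc, h1,
          Matrix.mul_zero]
      have h3 : Sb * Y = 0 := by
        rw [hSbT, Matrix.mul_assoc, h2, Matrix.mul_zero]
      have h4 := (opt_of_comp hY.1 hSbf h3).1
      exact proj_of_ker hXbs hQBorth hQBrange fun v hv => relint_ker_primal hmc.1 h4 hv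
    have hDD : ∀ p ∈ DualOpt C Cbar A b ε, p.2 * (QN * QNᵀ) = p.2 := by
      rintro ⟨y1, S1⟩ hp
      have hpf : DualFeasible C Cbar A ε y1 S1 := hp.1
      have h1 : S1 * (QB * UX * QBᵀ) = 0 := comp_of_opt hSA hXo hp
      have h2 : S1 * QB = 0 := by
        rw [factor_conj hQBorth hUX, ← Matrix.mul_assoc, h1, Matrix.zero_mul]
      have h3 : S1 * Xb = 0 := by
        rw [hW1', ← Matrix.mul_assoc, h2, Matrix.zero_mul]
      obtain ⟨hV1, hV2⟩ := core hSbs hSbf.2.2 hSbs hQNorth hQNrange (fun v => Iff.rfl)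
      obtain ⟨t, ht, htp⟩ := exists_sub_posDef hV2 hUS
      have hpsd : (QN * (QNᵀ * Sb * QN - t • US) * QNᵀ + t • S1).PosSemidef :=
        (conj_psd QN htp.posSemidef).add (hpf.2.2.smul ht.le)
      have hfeas : DualFeasible C Cbar A εbar (yb + t • (y1 - y))
          (QN * (QNᵀ * Sb * QN - t • US) * QNᵀ + t • S1) := by
        refine ⟨psd_symm hpsd, ?_, hpsd⟩
        have e1 : QN * (QNᵀ * Sb * QN - t • US) * QNᵀ = Sb - t • (QN * US * QNᵀ) := by
          rw [Matrix.mul_sub, Matrix.sub_mul, ← hV1, Matrix.mul_smul, Matrix.smul_mul]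
        have e2 : ∑ i, (yb + t • (y1 - y)) i • A i =
            (∑ i, yb i • A i) + t • ((∑ i, y1 i • A i) - ∑ i, y i • A i) := by
          rw [← Finset.sum_sub_distrib, Finset.smul_sum, ← Finset.sum_add_distrib]
          refine Finset.sum_congr rfl fun i _ => ?_
          simp only [Pi.add_apply, Pi.smul_apply, Pi.sub_apply, smul_eq_mul]
          module
        have e3 : (∑ i, yb i • A i) + t • ((∑ i, y1 i • A i) - ∑ i, y i • A i) +
            (Sb - t • (QN * US * QNᵀ) + t • S1) = ((∑ i, yb i • A i) + Sb) +
              t • (((∑ i, y1 i • A i) + S1) - ((∑ i, y i • A i) + QN * US * QNᵀ)) := by module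
        rw [e1, e2, e3, hyS, hpf.2.1, hSbf.2.1, sub_self, smul_zero, add_zero]
      have hz : (QN * (QNᵀ * Sb * QN - t • US) * QNᵀ + t • S1) * Xb = 0 := by
        rw [Matrix.add_mul, Matrix.mul_assoc _ QNᵀ Xb, hQNX, Matrix.smul_mul, h3]
        simp
      have h4 := (opt_of_comp hXbo.1 hfeas hz).2
      refine proj_of_ker hSbs hQNorth hQNrange fun v hv => ?_
      have h5 := relint_ker_dual hmc.2 h4 hv
      have h6 : QNᵀ *ᵥ v = 0 := by
        rw [hQNT, ← mulVec_mulVec, hv, mulVec_zero]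
      rw [add_mulVec, ← mulVec_mulVec, h6, mulVec_zero, zero_add, smul_mulVec] at h5
      exact (smul_eq_zero.1 h5).resolve_left ht.ne'
    refine ⟨_, y, _, Xb, yb, Sb, ⟨relint_primal hQBorth hUX hXo hPP,
      relint_dual hQNorth hUS hSo hDD⟩, hmc, ?_, ?_⟩
    · rw [range_conj hQBorth hUX, hQBrange]
    · rw [range_conj hQNorth hUS, hQNrange]
end
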